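/- arXiv:2306.13517 — 2 statements merged into one kernel-verified Lean document; each statement's English description precedes it below -/
import Mathlib

section
/- Let K be a regular convex n-sided polygon in ℝ^2 with n ≥ 3, i.e., K is the convex hull of n points p_i = c + r·(cos(θ + 2πi/n), sin(θ + 2πi/n)), i = 0, …, n−1, for some center c ∈ ℝ^2, radius r > 0, and angle θ. Then for every positive integer m, the m-fold illumination number of K is I^m(K) = ⌈mn / ⌊(n−1)/2⌋⌉. -/
/-!
Put `k = ⌊(n-1)/2⌋`.

*Reduction to the vertices.* A point `q` of `K` is a convex combination of vertices in which some
vertex `v` has positive weight, so any direction illuminating `v` also illuminates `q`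
(`exists_vertex_dominating`). Hence only the vertices matter.

*Lower bound.* If `u = -(cos φ, sin φ)` illuminates the vertex at angle `α`, then `u` points strictly
inwards across both edges at that vertex, i.e. `cos (α ± π/n - φ) > 0`. Modulo `2π` this puts `α - φ`
in an open interval of length `π - 2π/n`, and at most `k` of the angles `θ + 2πi/n` fit in it
(`card_illuminated_le`). Counting pairs (direction, illuminated vertex) gives `m n ≤ k |U|`.

*Upper bound.* The direction opposite to the middle of an arc of `k` consecutive vertices illuminates
all of them (`illuminates_vertex`). Laying `⌈mn/k⌉` such arcs end to end winds around the polygon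
at least `m` times, so that every vertex is covered by `m` arcs.
-/

open scoped Classical RealInnerProductSpace

noncomputable section

/-- The direction `u` illuminates the boundary point `p` with respect to `K`:
there is `l > 0` with `p + l • u` in the interior of `K`. -/
def Illuminates {d : ℕ} (K : Set (EuclideanSpace ℝ (Fin d)))
    (u p : EuclideanSpace ℝ (Fin d)) : Prop :=
  ∃ l : ℝ, 0 < l ∧ p + l • u ∈ interior K

/-- A multiset `U` of unit directions `m`-fold illuminates `K`:
each boundary point is illuminated by at least `m` elements of `U`
(counted with multiplicity). -/
def MFoldIlluminates {d : ℕ} (m : ℕ) (K : Set (EuclideanSpace ℝ (Fin d)))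
    (U : Multiset (EuclideanSpace ℝ (Fin d))) : Prop :=
  (∀ u ∈ U, ‖u‖ = 1) ∧
    ∀ p ∈ frontier K, m ≤ Multiset.countP (fun u => Illuminates K u p) U

/-- The `m`-fold illumination number of `K`: the smallest total multiplicity of a
multiset of unit directions that `m`-fold illuminates `K`. -/
def illumNum {d : ℕ} (m : ℕ) (K : Set (EuclideanSpace ℝ (Fin d))) : ℕ :=
  sInf {n | ∃ U : Multiset (EuclideanSpace ℝ (Fin d)),
    MFoldIlluminates m K U ∧ Multiset.card U = n}

/-- The point at angle `α` on the circle with center `c` and radius `r`. -/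
def circlePt (c : EuclideanSpace ℝ (Fin 2)) (r α : ℝ) : EuclideanSpace ℝ (Fin 2) :=
  c + r • (WithLp.equiv 2 (Fin 2 → ℝ)).symm ![Real.cos α, Real.sin α]

lemma circlePt_zero (c : EuclideanSpace ℝ (Fin 2)) (r α : ℝ) :
    circlePt c r α 0 = c 0 + r * Real.cos α := by
  simp [circlePt]

lemma circlePt_one (c : EuclideanSpace ℝ (Fin 2)) (r α : ℝ) :
    circlePt c r α 1 = c 1 + r * Real.sin α := by
  simp [circlePt]

/-- The unit vector `-(cos φ, sin φ)`. -/
def inwardDir (φ : ℝ) : EuclideanSpace ℝ (Fin 2) :=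
  (WithLp.equiv 2 (Fin 2 → ℝ)).symm ![-Real.cos φ, -Real.sin φ]

lemma inwardDir_zero (φ : ℝ) : inwardDir φ 0 = -Real.cos φ := by simp [inwardDir]

lemma inwardDir_one (φ : ℝ) : inwardDir φ 1 = -Real.sin φ := by simp [inwardDir]

lemma norm_inwardDir (φ : ℝ) : ‖inwardDir φ‖ = 1 := by
  rw [EuclideanSpace.norm_eq, Fin.sum_univ_two, inwardDir_zero, inwardDir_one]
  simp

lemma exists_inwardDir {u : EuclideanSpace ℝ (Fin 2)} (hu : ‖u‖ = 1) :
    ∃ φ, u = inwardDir φ := by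
  have h1 : ‖(⟨-u 0, -u 1⟩ : ℂ)‖ = 1 := by
    rw [EuclideanSpace.norm_eq, Fin.sum_univ_two, Real.norm_eq_abs, Real.norm_eq_abs,
      sq_abs, sq_abs] at hu
    rw [Complex.norm_def, Complex.normSq_mk, ← hu]
    congr 1
    ring
  refine ⟨Complex.arg ⟨-u 0, -u 1⟩, ?_⟩
  have hc := Complex.norm_mul_cos_arg (⟨-u 0, -u 1⟩ : ℂ)
  have hs := Complex.norm_mul_sin_arg (⟨-u 0, -u 1⟩ : ℂ)
  rw [h1, one_mul] at hc hs
  ext i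
  fin_cases i
  · simp [inwardDir_zero, hc]
  · simp [inwardDir_one, hs]

/-- Every point of a polytope is illuminated by all the directions that illuminate a suitable
vertex, namely any vertex with positive weight in a convex combination giving the point. -/
lemma exists_vertex_dominating {n : ℕ} (p : Fin n → EuclideanSpace ℝ (Fin 2))
    {q : EuclideanSpace ℝ (Fin 2)} (hq : q ∈ convexHull ℝ (Set.range p)) :
    ∃ i, ∀ u, Illuminates (convexHull ℝ (Set.range p)) u (p i) →
      Illuminates (convexHull ℝ (Set.range p)) u q := by
  have hq' := hq
  rw [convexHull_range_eq_exists_affineCombination] at hq'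
  obtain ⟨s, w, hw0, hw1, hwq⟩ := hq'
  obtain ⟨i, hi, hwi⟩ : ∃ i ∈ s, 0 < w i := by
    by_contra! h
    have := Finset.sum_nonpos h
    linarith
  rw [Finset.affineCombination_eq_linear_combination _ _ _ hw1] at hwq
  -- `x` is the combination of the remaining vertices, rescaled to total weight one
  obtain ⟨x, hx, hqx⟩ : ∃ x ∈ convexHull ℝ (Set.range p), q = w i • p i + (1 - w i) • x := by
    have hsum := Finset.add_sum_erase s w hi
    have hcomb := Finset.add_sum_erase s (fun j => w j • p j) hi
    have hnn : ∀ j ∈ s.erase i, 0 ≤ w j := fun j hj => hw0 j (Finset.mem_of_mem_erase hj)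
    have hnn' := Finset.sum_nonneg hnn
    rcases hnn'.eq_or_lt with h0 | hpos
    · refine ⟨p i, subset_convexHull ℝ _ ⟨i, rfl⟩, ?_⟩
      have hz := (Finset.sum_eq_zero_iff_of_nonneg hnn).1 h0.symm
      have : ∑ j ∈ s.erase i, w j • p j = 0 :=
        Finset.sum_eq_zero fun j hj => by rw [hz j hj, zero_smul]
      rw [← hwq, ← hcomb, this]
      have : w i = 1 := by linarith
      simp [this]
    · refine ⟨(s.erase i).centerMass w p, ?_, ?_⟩
      · exact (convex_convexHull ℝ _).centerMass_mem hnn hpos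
          fun j _ => subset_convexHull ℝ _ ⟨j, rfl⟩
      · have : 1 - w i = ∑ j ∈ s.erase i, w j := by linarith
        rw [← hwq, ← hcomb, Finset.centerMass, this, smul_smul, mul_inv_cancel₀ hpos.ne', one_smul]
  have hwi1 : w i ≤ 1 := hw1 ▸ Finset.single_le_sum (f := w) hw0 hi
  refine ⟨i, fun u ⟨l, hl, hlu⟩ => ⟨w i * l, mul_pos hwi hl, ?_⟩⟩
  have := (convex_convexHull ℝ (Set.range p)).combo_interior_self_mem_interior hlu hx hwi
    (sub_nonneg.2 hwi1) (by ring)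
  convert this using 1
  rw [hqx]
  module

/-- A set in a half-plane with unit normal at angle `β` has its interior in the open half-plane. -/
lemma interior_lt {K : Set (EuclideanSpace ℝ (Fin 2))} {β M : ℝ}
    (hK : ∀ y ∈ K, y 0 * Real.cos β + y 1 * Real.sin β ≤ M)
    {x : EuclideanSpace ℝ (Fin 2)} (hx : x ∈ interior K) :
    x 0 * Real.cos β + x 1 * Real.sin β < M := by
  have hcont : Continuous fun t : ℝ => circlePt x t β := by unfold circlePt; fun_prop
  have hnhds : ∀ᶠ t in nhds (0 : ℝ), circlePt x t β ∈ K := by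
    apply hcont.continuousAt.eventually
    have : circlePt x 0 β = x := by simp [circlePt]
    simp only [this]
    exact mem_interior_iff_mem_nhds.1 hx
  obtain ⟨ε, hε, hmem⟩ := ((hnhds.filter_mono (nhdsWithin_le_nhds (s := Set.Ioi 0))).and
    self_mem_nhdsWithin).exists
  have h1 := hK _ hε
  have h2 : (0 : ℝ) < ε := hmem
  rw [circlePt_zero, circlePt_one] at h1
  nlinarith [Real.sin_sq_add_cos_sq β]

lemma sin_mul_sin_nonneg {n : ℕ} (hn : 0 < n) (d : ℤ) (h1 : -(n : ℤ) < d) (h2 : d ≤ n) :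
    0 ≤ Real.sin (d * Real.pi / n) * Real.sin ((d - 1) * Real.pi / n) := by
  have hn' : (0 : ℝ) < n := by exact_mod_cast hn
  have hpi := Real.pi_pos
  have h2' : (d : ℝ) ≤ n := by exact_mod_cast h2
  have h1' : -(n : ℝ) + 1 ≤ d := by exact_mod_cast h1
  rcases le_or_gt d 0 with hd | hd
  · have hd' : (d : ℝ) ≤ 0 := by exact_mod_cast hd
    apply mul_nonneg_of_nonpos_of_nonpos
    · apply Real.sin_nonpos_of_nonpos_of_neg_pi_le
      · rw [div_le_iff₀ hn']; nlinarith
      · rw [le_div_iff₀ hn']; nlinarith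
    · apply Real.sin_nonpos_of_nonpos_of_neg_pi_le
      · rw [div_le_iff₀ hn']; nlinarith
      · rw [le_div_iff₀ hn']; nlinarith
  · have hd' : (1 : ℝ) ≤ d := by exact_mod_cast hd
    apply mul_nonneg
    · apply Real.sin_nonneg_of_nonneg_of_le_pi
      · rw [le_div_iff₀ hn']; nlinarith
      · rw [div_le_iff₀ hn']; nlinarith
    · apply Real.sin_nonneg_of_nonneg_of_le_pi
      · rw [le_div_iff₀ hn']; nlinarith
      · rw [div_le_iff₀ hn']; nlinarith

lemma cos_odd_le {n : ℕ} (hn : 0 < n) (d : ℤ) (h1 : -(n : ℤ) < d) (h2 : d ≤ n) :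
    Real.cos ((2 * d - 1) * Real.pi / n) ≤ Real.cos (Real.pi / n) := by
  have h := sin_mul_sin_nonneg hn d h1 h2
  have e := Real.cos_sub_cos ((2 * d - 1) * Real.pi / n) (Real.pi / n)
  have e1 : ((2 * d - 1) * Real.pi / n + Real.pi / n) / 2 = d * Real.pi / n := by ring
  have e2 : ((2 * d - 1) * Real.pi / n - Real.pi / n) / 2 = (d - 1) * Real.pi / n := by ring
  rw [e1, e2] at e
  linarith

section Polygon

variable {n : ℕ} {c : EuclideanSpace ℝ (Fin 2)} {r θ : ℝ} {p : Fin n → EuclideanSpace ℝ (Fin 2)}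

/-- The edges at the vertex `p i` have outer normals at angle `α ± π/n`, where `α` is the angle of
`p i`; `s = ±1` selects the edge. The polygon lies in the half-plane bounded by this edge. -/
lemma le_edge (hn : 3 ≤ n) (hr : 0 < r)
    (hp : ∀ i : Fin n, p i = circlePt c r (θ + 2 * Real.pi * (i : ℝ) / (n : ℝ)))
    (i : Fin n) (s : ℝ) (hs : s = 1 ∨ s = -1) {β : ℝ}
    (hβ : β = θ + 2 * Real.pi * (i : ℝ) / (n : ℝ) + s * (Real.pi / n)) :
    ∀ y ∈ convexHull ℝ (Set.range p), y 0 * Real.cos β + y 1 * Real.sin β ≤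
      c 0 * Real.cos β + c 1 * Real.sin β + r * Real.cos (Real.pi / n) := by
  intro y hy
  have hconv : Convex ℝ {y : EuclideanSpace ℝ (Fin 2) | y 0 * Real.cos β + y 1 * Real.sin β ≤
      c 0 * Real.cos β + c 1 * Real.sin β + r * Real.cos (Real.pi / n)} := by
    apply convex_halfSpace_le
    constructor
    · intro x y; simp only [PiLp.add_apply]; ring
    · intro a x; simp only [PiLp.smul_apply, smul_eq_mul]; ring
  refine convexHull_min ?_ hconv hy
  rintro _ ⟨j, rfl⟩
  rw [Set.mem_ofPred_eq, hp j, circlePt_zero, circlePt_one]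
  have key : Real.cos (θ + 2 * Real.pi * (j : ℝ) / (n : ℝ) - β) ≤ Real.cos (Real.pi / n) := by
    have hi := i.2
    have hj := j.2
    rcases hs with rfl | rfl
    · convert cos_odd_le (n := n) (by omega) ((j : ℤ) - i) (by omega) (by omega) using 2
      rw [hβ]; push_cast; ring
    · convert cos_odd_le (n := n) (by omega) ((j : ℤ) - i + 1) (by omega) (by omega) using 2
      rw [hβ]; push_cast; ring
  rw [Real.cos_sub] at key
  nlinarith

lemma vertex_edge (hp : ∀ i : Fin n, p i = circlePt c r (θ + 2 * Real.pi * (i : ℝ) / (n : ℝ)))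
    (i : Fin n) (s : ℝ) (hs : s = 1 ∨ s = -1) {β : ℝ}
    (hβ : β = θ + 2 * Real.pi * (i : ℝ) / (n : ℝ) + s * (Real.pi / n)) :
    p i 0 * Real.cos β + p i 1 * Real.sin β =
      c 0 * Real.cos β + c 1 * Real.sin β + r * Real.cos (Real.pi / n) := by
  rw [hp i, circlePt_zero, circlePt_one]
  have key : Real.cos (θ + 2 * Real.pi * (i : ℝ) / (n : ℝ) - β) = Real.cos (Real.pi / n) := by
    rcases hs with rfl | rfl
    · rw [← Real.cos_neg (Real.pi / n)]; congr 1; rw [hβ]; ring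
    · congr 1; rw [hβ]; ring
  rw [← key, Real.cos_sub]
  ring

lemma vertex_mem_frontier (hn : 3 ≤ n) (hr : 0 < r)
    (hp : ∀ i : Fin n, p i = circlePt c r (θ + 2 * Real.pi * (i : ℝ) / (n : ℝ))) (i : Fin n) :
    p i ∈ frontier (convexHull ℝ (Set.range p)) := by
  refine ⟨subset_closure (subset_convexHull ℝ _ ⟨i, rfl⟩), fun h => ?_⟩
  have h1 := interior_lt (le_edge hn hr hp i 1 (Or.inl rfl) rfl) h
  have h2 := vertex_edge hp i 1 (Or.inl rfl) rfl
  linarith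

lemma cos_pos_of_illuminates (hn : 3 ≤ n) (hr : 0 < r)
    (hp : ∀ i : Fin n, p i = circlePt c r (θ + 2 * Real.pi * (i : ℝ) / (n : ℝ))) (i : Fin n)
    {φ : ℝ} (h : Illuminates (convexHull ℝ (Set.range p)) (inwardDir φ) (p i))
    (s : ℝ) (hs : s = 1 ∨ s = -1) :
    0 < Real.cos (θ + 2 * Real.pi * (i : ℝ) / (n : ℝ) + s * (Real.pi / n) - φ) := by
  obtain ⟨l, hl, hmem⟩ := h
  have h1 := interior_lt (le_edge hn hr hp i s hs rfl) hmem
  have h2 := vertex_edge hp i s hs rfl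
  simp only [PiLp.add_apply, PiLp.smul_apply, smul_eq_mul, inwardDir_zero, inwardDir_one] at h1
  rw [Real.cos_sub]
  by_contra! hcon
  nlinarith

/-- If `cos (x ± δ) > 0`, then `x` lies in `(-(π/2 - δ), π/2 - δ)` modulo `2π`. -/
lemma exists_shift {x δ : ℝ} (hδ0 : 0 ≤ δ) (hδ : δ ≤ Real.pi / 2) (h1 : 0 < Real.cos (x + δ))
    (h2 : 0 < Real.cos (x - δ)) : ∃ t : ℤ, |x + 2 * Real.pi * t| < Real.pi / 2 - δ := by
  have hpi := Real.pi_pos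
  refine ⟨-round (x / (2 * Real.pi)), ?_⟩
  have hr := abs_sub_round (x / (2 * Real.pi))
  set t := round (x / (2 * Real.pi)) with ht
  have hx : x = 2 * Real.pi * (x / (2 * Real.pi)) := by field_simp
  obtain ⟨hr1, hr2⟩ := abs_le.1 hr
  have e1 : Real.cos (x + 2 * Real.pi * ((-t : ℤ) : ℝ) + δ) = Real.cos (x + δ) := by
    rw [← Real.cos_sub_int_mul_two_pi (x + δ) t]; congr 1; push_cast; ring
  have e2 : Real.cos (x + 2 * Real.pi * ((-t : ℤ) : ℝ) - δ) = Real.cos (x - δ) := by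
    rw [← Real.cos_sub_int_mul_two_pi (x - δ) t]; congr 1; push_cast; ring
  have hy1 : x + 2 * Real.pi * ((-t : ℤ) : ℝ) ≤ Real.pi := by push_cast; nlinarith
  have hy2 : -Real.pi ≤ x + 2 * Real.pi * ((-t : ℤ) : ℝ) := by push_cast; nlinarith
  rw [← e1] at h1
  rw [← e2] at h2
  generalize x + 2 * Real.pi * ((-t : ℤ) : ℝ) = y at *
  rw [abs_lt]
  constructor
  · by_contra! hcon
    rw [← Real.cos_neg] at h2
    have := Real.cos_nonpos_of_pi_div_two_le_of_le (x := -(y - δ)) (by linarith) (by linarith)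
    linarith
  · by_contra! hcon
    have := Real.cos_nonpos_of_pi_div_two_le_of_le (x := y + δ) (by linarith) (by linarith)
    linarith

/-- One direction illuminates at most `⌊(n-1)/2⌋` vertices. In units of the angular step `2π/n`,
their indices (suitably shifted by multiples of `n`) are distinct integers in an open interval
of length `(n-2)/2`. -/
lemma card_illuminated_le (hn : 3 ≤ n) (hr : 0 < r)
    (hp : ∀ i : Fin n, p i = circlePt c r (θ + 2 * Real.pi * (i : ℝ) / (n : ℝ)))
    {u : EuclideanSpace ℝ (Fin 2)} (hu : ‖u‖ = 1) :
    (Finset.univ.filter fun i => Illuminates (convexHull ℝ (Set.range p)) u (p i)).card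
      ≤ (n - 1) / 2 := by
  obtain ⟨φ, rfl⟩ := exists_inwardDir hu
  have hpi := Real.pi_pos
  have hn3 : (3 : ℝ) ≤ n := by exact_mod_cast hn
  have hn0 : (0 : ℝ) < n := by linarith
  set z : ℝ := (θ - φ) * n / (2 * Real.pi) with hz
  have hex : ∀ i : Fin n, ∃ t : ℤ, Illuminates (convexHull ℝ (Set.range p)) (inwardDir φ) (p i) →
      |z + ((i : ℝ) + n * t)| < ((n : ℝ) - 2) / 4 := by
    intro i
    by_cases hi : Illuminates (convexHull ℝ (Set.range p)) (inwardDir φ) (p i)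
    · have h1 := cos_pos_of_illuminates hn hr hp i hi 1 (Or.inl rfl)
      have h2 := cos_pos_of_illuminates hn hr hp i hi (-1) (Or.inr rfl)
      obtain ⟨t, ht⟩ := exists_shift (x := θ + 2 * Real.pi * (i : ℝ) / (n : ℝ) - φ)
        (δ := Real.pi / n) (by positivity)
        (by apply div_le_div_of_nonneg_left <;> linarith)
        (by convert h1 using 2; ring) (by convert h2 using 2; ring)
      refine ⟨t, fun _ => ?_⟩
      have e : θ + 2 * Real.pi * (i : ℝ) / (n : ℝ) - φ + 2 * Real.pi * t
          = (2 * Real.pi / n) * (z + ((i : ℝ) + n * t)) := by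
        rw [hz]; field_simp; ring
      have e' : Real.pi / 2 - Real.pi / n = (2 * Real.pi / n) * (((n : ℝ) - 2) / 4) := by
        field_simp; ring
      rw [e, abs_mul, abs_of_pos (by positivity), e'] at ht
      exact lt_of_mul_lt_mul_left ht (by positivity)
    · exact ⟨0, fun h => absurd h hi⟩
  choose t ht using hex
  set A : ℝ := -z - ((n : ℝ) - 2) / 4 with hA
  set B : ℝ := -z + ((n : ℝ) - 2) / 4 with hB
  have hcard : (Finset.univ.filter fun i =>
      Illuminates (convexHull ℝ (Set.range p)) (inwardDir φ) (p i)).card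
      ≤ (Finset.Ioo ⌊A⌋ ⌈B⌉).card := by
    apply Finset.card_le_card_of_injOn (fun i : Fin n => ((i : ℕ) : ℤ) + n * t i)
    · intro i hi
      have hi' := ht i (by simpa using hi)
      rw [abs_lt] at hi'
      rw [Finset.coe_Ioo, Set.mem_Ioo, Int.floor_lt, Int.lt_ceil]
      push_cast
      constructor <;> linarith
    · intro i _ j _ hij
      have h := congrArg (fun a : ℤ => a % n) hij
      simp only [Int.add_mul_emod_self_left] at h
      rw [Int.emod_eq_of_lt (by omega) (by have := i.2; omega),
        Int.emod_eq_of_lt (by omega) (by have := j.2; omega)] at h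
      exact Fin.ext (by exact_mod_cast h)
  refine hcard.trans ?_
  rw [Int.card_Ioo]
  have h1 := Int.ceil_lt_add_one B
  have h2 := Int.lt_floor_add_one A
  have h3 : ((2 * (⌈B⌉ - ⌊A⌋ - 1) : ℤ) : ℝ) < ((n : ℤ) : ℝ) := by push_cast; linarith
  have h4 : 2 * (⌈B⌉ - ⌊A⌋ - 1) < (n : ℤ) := by exact_mod_cast h3
  omega

/-- The vertices may be indexed by all integers, periodically. -/
lemma circlePt_mem_range (hn : 3 ≤ n)
    (hp : ∀ i : Fin n, p i = circlePt c r (θ + 2 * Real.pi * (i : ℝ) / (n : ℝ))) (j : ℤ) :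
    circlePt c r (θ + 2 * Real.pi * (j : ℝ) / (n : ℝ)) ∈ Set.range p := by
  have hn0 : (n : ℝ) ≠ 0 := by
    have : n ≠ 0 := by omega
    exact_mod_cast this
  have hnn : 0 ≤ j % n := Int.emod_nonneg _ (by omega)
  have hlt : j % n < n := Int.emod_lt_of_pos _ (by omega)
  refine ⟨⟨(j % n).toNat, by omega⟩, ?_⟩
  rw [hp]
  have hj : (j : ℝ) = (((j % n).toNat : ℕ) : ℝ) + n * ((j / n : ℤ) : ℝ) := by
    have h1 : j = (((j % n).toNat : ℕ) : ℤ) + n * (j / n) := by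
      rw [Int.toNat_of_nonneg hnn]; exact (Int.emod_add_mul_ediv j n).symm
    exact_mod_cast h1
  have e : θ + 2 * Real.pi * (j : ℝ) / (n : ℝ) = θ + 2 * Real.pi * (((j % n).toNat : ℕ) : ℝ) / n
      + ((j / n : ℤ) : ℝ) * (2 * Real.pi) := by
    rw [hj]; field_simp; ring
  rw [e]
  unfold circlePt
  rw [Real.cos_add_int_mul_two_pi, Real.sin_add_int_mul_two_pi]

/-- A direction in the open cone spanned by two edge vectors issuing from a point illuminates it.
Here `K` contains the triangle `p, q₁, q₂`, and the hypotheses say that, with respect to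
`q₁ - p, q₂ - p`, the coordinates of `u` (given by Cramer's rule) are positive. -/
lemma illuminates_of_triangle {K : Set (EuclideanSpace ℝ (Fin 2))} (hK : Convex ℝ K)
    {p q₁ q₂ u : EuclideanSpace ℝ (Fin 2)} (hp : p ∈ K) (hq₁ : q₁ ∈ K) (hq₂ : q₂ ∈ K)
    (hD : 0 < (q₁ 0 - p 0) * (q₂ 1 - p 1) - (q₁ 1 - p 1) * (q₂ 0 - p 0))
    (h1 : 0 < u 0 * (q₂ 1 - p 1) - u 1 * (q₂ 0 - p 0))
    (h2 : 0 < (q₁ 0 - p 0) * u 1 - (q₁ 1 - p 1) * u 0) :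
    Illuminates K u p := by
  set D := (q₁ 0 - p 0) * (q₂ 1 - p 1) - (q₁ 1 - p 1) * (q₂ 0 - p 0) with hDdef
  -- `D` times the barycentric coordinates of a point with respect to `q₁` and `q₂`
  set f : EuclideanSpace ℝ (Fin 2) → ℝ :=
    fun x => (x 0 - p 0) * (q₂ 1 - p 1) - (x 1 - p 1) * (q₂ 0 - p 0) with hf
  set g : EuclideanSpace ℝ (Fin 2) → ℝ :=
    fun x => (q₁ 0 - p 0) * (x 1 - p 1) - (q₁ 1 - p 1) * (x 0 - p 0) with hg
  set a := u 0 * (q₂ 1 - p 1) - u 1 * (q₂ 0 - p 0) with ha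
  set b := (q₁ 0 - p 0) * u 1 - (q₁ 1 - p 1) * u 0 with hb
  have hfc : Continuous f := by fun_prop
  have hgc : Continuous g := by fun_prop
  have hopen : IsOpen {x | 0 < f x ∧ 0 < g x ∧ f x + g x < D} :=
    (isOpen_lt continuous_const hfc).inter ((isOpen_lt continuous_const hgc).inter
      (isOpen_lt (hfc.add hgc) continuous_const))
  have hsub : {x | 0 < f x ∧ 0 < g x ∧ f x + g x < D} ⊆ K := by
    rintro x ⟨hx1, hx2, hx3⟩
    have hx : x = ((D - f x - g x) / D) • p + (f x / D) • q₁ + (g x / D) • q₂ := by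
      ext i
      fin_cases i
      · simp only [Fin.zero_eta, PiLp.add_apply, PiLp.smul_apply, smul_eq_mul]
        field_simp
        simp only [hf, hg, hDdef]; ring
      · simp only [Fin.mk_one, PiLp.add_apply, PiLp.smul_apply, smul_eq_mul]
        field_simp
        simp only [hf, hg, hDdef]; ring
    have hsum : (D - f x - g x) / D + f x / D + g x / D = 1 := by field_simp; ring
    have hmem := hK.sum_mem (t := Finset.univ)
      (w := ![(D - f x - g x) / D, f x / D, g x / D]) (z := ![p, q₁, q₂])
      (by
        intro i _
        fin_cases i
        · exact div_nonneg (by linarith) hD.le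
        · exact div_nonneg hx1.le hD.le
        · exact div_nonneg hx2.le hD.le)
      (by simpa [Fin.sum_univ_three] using hsum)
      (by intro i _; fin_cases i <;> assumption)
    rw [hx]
    simpa [Fin.sum_univ_three] using hmem
  refine ⟨D / (2 * (a + b)), by positivity, interior_maximal hsub hopen ?_⟩
  have ef : f (p + (D / (2 * (a + b))) • u) = D / (2 * (a + b)) * a := by
    simp only [hf, ha, PiLp.add_apply, PiLp.smul_apply, smul_eq_mul]; ring
  have eg : g (p + (D / (2 * (a + b))) • u) = D / (2 * (a + b)) * b := by
    simp only [hg, hb, PiLp.add_apply, PiLp.smul_apply, smul_eq_mul]; ring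
  rw [Set.mem_ofPred_eq, ef, eg]
  refine ⟨by positivity, by positivity, ?_⟩
  have : D / (2 * (a + b)) * a + D / (2 * (a + b)) * b = D / 2 := by field_simp
  linarith

/-- The direction pointing inwards from the middle of the arc of vertices `s, …, s + k - 1`
illuminates all of them, provided `k < n / 2`. -/
lemma illuminates_vertex (hn : 3 ≤ n) (hr : 0 < r)
    (hp : ∀ i : Fin n, p i = circlePt c r (θ + 2 * Real.pi * (i : ℝ) / (n : ℝ)))
    {k : ℕ} (hk : 2 * k < n) {s j : ℤ} (h1 : s ≤ j) (h2 : j < s + k) :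
    Illuminates (convexHull ℝ (Set.range p))
      (inwardDir (θ + 2 * Real.pi * (s + ((k : ℝ) - 1) / 2) / n))
      (circlePt c r (θ + 2 * Real.pi * (j : ℝ) / (n : ℝ))) := by
  have hpi := Real.pi_pos
  have hn3 : (3 : ℝ) ≤ n := by exact_mod_cast hn
  have hn0 : (0 : ℝ) < n := by linarith
  have hk' : 2 * (k : ℝ) < n := by exact_mod_cast hk
  have h1' : (s : ℝ) ≤ j := by exact_mod_cast h1
  have h2' : (j : ℝ) + 1 ≤ s + k := by exact_mod_cast h2
  set α := θ + 2 * Real.pi * (j : ℝ) / (n : ℝ) with hα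
  set δ := Real.pi / n with hδ
  -- the neighbouring vertices are at angles `α ± 2δ`; `ψ` is the deviation from the radial direction
  set ψ := 2 * δ * (s + ((k : ℝ) - 1) / 2 - j) with hψ
  have hφ : θ + 2 * Real.pi * (s + ((k : ℝ) - 1) / 2) / n = α + ψ := by
    rw [hψ, hα, hδ]; ring
  have hδ0 : 0 < δ := by positivity
  have hδn : δ * n = Real.pi := by rw [hδ]; field_simp
  have hδ1 : δ < Real.pi / 2 := by nlinarith
  have hψ1 : ψ + δ < Real.pi / 2 := by nlinarith
  have hψ2 : -(Real.pi / 2) < ψ - δ := by nlinarith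
  have hsin : 0 < Real.sin δ := Real.sin_pos_of_pos_of_lt_pi hδ0 (by linarith)
  have hcos : 0 < Real.cos δ := Real.cos_pos_of_mem_Ioo ⟨by linarith, hδ1⟩
  have hc1 : 0 < Real.cos (ψ + δ) := Real.cos_pos_of_mem_Ioo ⟨by linarith, hψ1⟩
  have hc2 : 0 < Real.cos (ψ - δ) := Real.cos_pos_of_mem_Ioo ⟨hψ2, by linarith⟩
  have hplus := circlePt_mem_range hn hp (j + 1)
  have hminus := circlePt_mem_range hn hp (j - 1)
  have ep : θ + 2 * Real.pi * ((j + 1 : ℤ) : ℝ) / (n : ℝ) = α + 2 * δ := by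
    rw [hα, hδ]; push_cast; ring
  have em : θ + 2 * Real.pi * ((j - 1 : ℤ) : ℝ) / (n : ℝ) = α - 2 * δ := by
    rw [hα, hδ]; push_cast; ring
  rw [ep] at hplus
  rw [em] at hminus
  rw [hφ]
  have hS := Real.sin_sq_add_cos_sq α
  have hcos2 : Real.cos (2 * δ) = 1 - 2 * Real.sin δ ^ 2 := by
    rw [Real.cos_two_mul, Real.cos_sq']; ring
  apply illuminates_of_triangle (convex_convexHull ℝ _)
    (subset_convexHull ℝ _ (circlePt_mem_range hn hp j))
    (subset_convexHull ℝ _ hplus) (subset_convexHull ℝ _ hminus)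
  · simp only [circlePt_zero, circlePt_one]
    have : 0 < r ^ 2 * (4 * Real.sin δ ^ 2 * (2 * Real.sin δ * Real.cos δ)) := by positivity
    convert this using 1
    rw [Real.cos_add α, Real.sin_add α, Real.cos_sub, Real.sin_sub, Real.sin_two_mul, hcos2]
    linear_combination (8 * r ^ 2 * Real.sin δ ^ 3 * Real.cos δ) * hS
  · simp only [circlePt_zero, circlePt_one, inwardDir_zero, inwardDir_one]
    have : 0 < r * (2 * Real.sin δ * Real.cos (ψ + δ)) := by positivity
    convert this using 1
    rw [Real.cos_add ψ, Real.cos_add α ψ, Real.sin_add α ψ, Real.cos_sub, Real.sin_sub,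
      Real.sin_two_mul, hcos2]
    linear_combination (2 * r * Real.sin δ * (Real.cos ψ * Real.cos δ - Real.sin ψ * Real.sin δ)) * hS
  · simp only [circlePt_zero, circlePt_one, inwardDir_zero, inwardDir_one]
    have : 0 < r * (2 * Real.sin δ * Real.cos (ψ - δ)) := by positivity
    convert this using 1
    rw [Real.cos_sub ψ, Real.cos_add α ψ, Real.sin_add α ψ, Real.cos_add α, Real.sin_add α,
      Real.sin_two_mul, hcos2]
    linear_combination (2 * r * Real.sin δ * (Real.cos ψ * Real.cos δ + Real.sin ψ * Real.sin δ)) * hS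

end Polygon

/-- Double counting of a relation between a finite type and a multiset. -/
lemma sum_countP_le {ι E : Type*} [Fintype ι] (R : E → ι → Prop) (k : ℕ) (U : Multiset E)
    (h : ∀ u ∈ U, (Finset.univ.filter fun i => R u i).card ≤ k) :
    ∑ i, Multiset.countP (fun u => R u i) U ≤ k * Multiset.card U := by
  induction U using Multiset.induction_on with
  | empty => simp
  | cons a U ih =>
    have h1 := ih fun u hu => h u (Multiset.mem_cons_of_mem hu)
    have h2 := h a (Multiset.mem_cons_self a U)
    rw [Finset.card_filter] at h2
    simp only [Multiset.countP_cons, Finset.sum_add_distrib, Multiset.card_cons]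
    linarith

/-- Theorem 4 (first part): for a regular convex `n`-sided polygon `K` (`n ≥ 3`),
`I^m(K) = ⌈mn / ⌊(n-1)/2⌋⌉`. -/
theorem mfold_illumination_regular_polygon (n : ℕ) (hn : 3 ≤ n)
    (c : EuclideanSpace ℝ (Fin 2)) (r θ : ℝ) (hr : 0 < r)
    (p : Fin n → EuclideanSpace ℝ (Fin 2))
    (hp : ∀ i : Fin n, p i = c + r •
      (WithLp.equiv 2 (Fin 2 → ℝ)).symm
      ![Real.cos (θ + 2 * Real.pi * (i : ℝ) / (n : ℝ)),
        Real.sin (θ + 2 * Real.pi * (i : ℝ) / (n : ℝ))])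
    (K : Set (EuclideanSpace ℝ (Fin 2))) (hK : K = convexHull ℝ (Set.range p))
    (m : ℕ) (hm : 1 ≤ m) :
    illumNum m K = ⌈(m * n : ℚ) / (((n - 1) / 2 : ℕ) : ℚ)⌉₊ := by
  subst hK
  have hp' : ∀ i : Fin n, p i = circlePt c r (θ + 2 * Real.pi * (i : ℝ) / (n : ℝ)) := hp
  set k := (n - 1) / 2 with hk
  have hk0 : 0 < k := by omega
  have hkn : 2 * k < n := by omega
  have hkQ : (0 : ℚ) < k := by exact_mod_cast hk0
  set N := ⌈(m * n : ℚ) / (k : ℚ)⌉₊ with hN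
  have hNk : m * n ≤ N * k := by
    have h1 := Nat.le_ceil ((m * n : ℚ) / (k : ℚ))
    rw [← hN, div_le_iff₀ hkQ] at h1
    exact_mod_cast h1
  have hmem : N ∈ {n' | ∃ U : Multiset (EuclideanSpace ℝ (Fin 2)),
      MFoldIlluminates m (convexHull ℝ (Set.range p)) U ∧ Multiset.card U = n'} := by
    set d : ℕ → EuclideanSpace ℝ (Fin 2) := fun t =>
      inwardDir (θ + 2 * Real.pi * (((t * k : ℕ) : ℤ) + ((k : ℝ) - 1) / 2) / n) with hd
    refine ⟨(Multiset.range N).map d, ⟨?_, ?_⟩, by simp⟩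
    · intro u hu
      obtain ⟨t, _, rfl⟩ := Multiset.mem_map.1 hu
      exact norm_inwardDir _
    · intro q hq
      have hclosed : IsClosed (convexHull ℝ (Set.range p)) :=
        (Set.finite_range p).isClosed_convexHull ℝ
      obtain ⟨i, hi⟩ := exists_vertex_dominating p (hclosed.frontier_subset hq)
      rw [Multiset.countP_map]
      change m ≤ ((Finset.range N).filter fun t => Illuminates _ (d t) q).card
      -- the `a`-th passage through vertex `i` occurs at position `i + n a`, in arc `(i + n a) / k`
      have hinj : Set.InjOn (fun a : ℕ => ((i : ℕ) + n * a) / k) (Finset.range m) := by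
        have hmono : StrictMono fun a : ℕ => ((i : ℕ) + n * a) / k := by
          apply strictMono_nat_of_lt_succ
          intro a
          have h1 : ((i : ℕ) + n * a) / k + 1 = ((i : ℕ) + n * a + k) / k :=
            (Nat.add_div_right _ hk0).symm
          have h2 : ((i : ℕ) + n * a + k) / k ≤ ((i : ℕ) + n * (a + 1)) / k :=
            Nat.div_le_div_right (by rw [mul_add]; omega)
          omega
        exact hmono.injective.injOn
      have hmaps : Set.MapsTo (fun a : ℕ => ((i : ℕ) + n * a) / k) (Finset.range m)
          ((Finset.range N).filter fun t =>
            Illuminates (convexHull ℝ (Set.range p)) (d t) q : Finset ℕ) := by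
        intro a ha
        have ha' : a < m := by simpa using ha
        rw [Finset.mem_coe, Finset.mem_filter, Finset.mem_range]
        constructor
        · rw [Nat.div_lt_iff_lt_mul hk0]
          have := i.2
          nlinarith
        · apply hi
          have h1 := Nat.div_mul_le_self ((i : ℕ) + n * a) k
          have h2 := Nat.lt_div_mul_add hk0 (a := (i : ℕ) + n * a)
          have h := illuminates_vertex hn hr hp' hkn
            (s := ((((i : ℕ) + n * a) / k * k : ℕ) : ℤ)) (j := (((i : ℕ) + n * a : ℕ) : ℤ))
            (by exact_mod_cast h1) (by exact_mod_cast h2)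
          have hn0 : (n : ℝ) ≠ 0 := by
            have : n ≠ 0 := by omega
            exact_mod_cast this
          have e : θ + 2 * Real.pi * ((((i : ℕ) + n * a : ℕ) : ℤ) : ℝ) / (n : ℝ)
              = θ + 2 * Real.pi * (i : ℝ) / n + (a : ℕ) * (2 * Real.pi) := by
            push_cast; field_simp; ring
          have ev : circlePt c r (θ + 2 * Real.pi * ((((i : ℕ) + n * a : ℕ) : ℤ) : ℝ) / (n : ℝ))
              = p i := by
            rw [e, hp' i]
            unfold circlePt
            rw [Real.cos_add_nat_mul_two_pi, Real.sin_add_nat_mul_two_pi]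
          rw [ev] at h
          exact h
      simpa using Finset.card_le_card_of_injOn _ hmaps hinj
  refine le_antisymm (Nat.sInf_le hmem) (le_csInf ⟨_, hmem⟩ ?_)
  rintro _ ⟨U, ⟨hU1, hU2⟩, rfl⟩
  rw [hN, Nat.ceil_le, div_le_iff₀ hkQ]
  have h1 := sum_countP_le (fun u i => Illuminates (convexHull ℝ (Set.range p)) u (p i)) k U
    fun u hu => card_illuminated_le hn hr hp' (hU1 u hu)
  have h2 : ∑ _i : Fin n, m ≤
      ∑ i, Multiset.countP (fun u => Illuminates (convexHull ℝ (Set.range p)) u (p i)) U :=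
    Finset.sum_le_sum fun i _ => hU2 _ (vertex_mem_frontier hn hr hp' i)
  rw [Finset.sum_const, Finset.card_univ, Fintype.card_fin, smul_eq_mul] at h2
  have h3 : m * n ≤ Multiset.card U * k := by linarith
  exact_mod_cast h3
end
end

section
/- Let K be a regular convex n-sided polygon in ℝ^2 with n ≥ 3, i.e., K is the convex hull of n points p_i = c + r·(cos(θ + 2πi/n), sin(θ + 2πi/n)), i = 0, …, n−1, for some center c ∈ ℝ^2, radius r > 0, and angle θ, and let m be a positive integer. If either (i) n is odd and n ≥ 2m + 1, or (ii) n is even and n ≥ 4m + 2, then the m-fold illumination number of K is I^m(K) = 2m + 1. -/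
/-!
The value `2 * m + 1` is a lower bound for every nonempty compact set in the plane when `1 ≤ m`: if a
multiset `U` of directions `m`-fold illuminates `K`, pick `u₀ ∈ U` and a nonzero `w ⟂ u₀`.  A maximiser
and a minimiser of `⟪w, ·⟫` on `K` are boundary points illuminated only by directions with
`⟪w, u⟫ < 0`, respectively `⟪w, u⟫ > 0`; so no direction illuminates both, and `u₀` illuminates
neither, whence `2 * m + 1 ≤ card U` (`two_mul_add_one_le_card`).

For the upper bound it suffices to illuminate the vertices, because a direction illuminating a
vertex illuminates every convex combination of vertices giving it positive weight
(`exists_vertex_illuminates`).  Put `k = (n - 1) / 2`, rounded down.  The direction opposite to the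
midpoint of the arc spanned by `k` consecutive vertices illuminates all of them, since `2 * k < n`
(`illuminates_vertex`).  Take `2 * m + 1` such blocks, the `j`-th one starting at the vertex of index
`⌊j * n / (2 * m + 1)⌋`.  The hypothesis on `n` says precisely that
`m * n ≤ k * (2 * m + 1)`, and this forces every vertex to lie in at least `m` of the blocks.
-/

open scoped Classical RealInnerProductSpace

noncomputable section

/-! ### The lower bound -/

/-- A nonconstant linear functional does not attain its maximum over `K` in the interior of `K`. -/
lemma inner_lt_of_mem_interior {d : ℕ} {K : Set (EuclideanSpace ℝ (Fin d))}
    {w x : EuclideanSpace ℝ (Fin d)} {M : ℝ} (hw : w ≠ 0) (hx : x ∈ interior K)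
    (hM : ∀ y ∈ K, ⟪w, y⟫ ≤ M) : ⟪w, x⟫ < M := by
  have hcont : Filter.Tendsto (fun t : ℝ => x + t • w) (nhds 0) (nhds x) := by
    have : Continuous (fun t : ℝ => x + t • w) := by fun_prop
    simpa using this.tendsto 0
  have hev : ∀ᶠ t in nhdsWithin (0 : ℝ) (Set.Ioi 0), x + t • w ∈ K :=
    (hcont.eventually (mem_interior_iff_mem_nhds.mp hx)).filter_mono nhdsWithin_le_nhds
  obtain ⟨t, htK, ht⟩ := (hev.and self_mem_nhdsWithin).exists
  have h := hM _ htK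
  rw [inner_add_right, inner_smul_right] at h
  have : 0 < t * ⟪w, w⟫ := mul_pos ht (real_inner_self_pos.mpr hw)
  linarith

/-- A boundary point at which `⟪w, ·⟫` is maximal over `K` is illuminated only by directions on
the negative side of `w`. -/
lemma exists_frontier_inner_neg {d : ℕ} {K : Set (EuclideanSpace ℝ (Fin d))}
    (hK : IsCompact K) (hne : K.Nonempty) {w : EuclideanSpace ℝ (Fin d)} (hw : w ≠ 0) :
    ∃ x ∈ frontier K, ∀ u, Illuminates K u x → ⟪w, u⟫ < 0 := by
  obtain ⟨x, hxK, hmax⟩ := hK.exists_isMaxOn hne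
    (f := fun y => ⟪w, y⟫) (by fun_prop)
  have hM : ∀ y ∈ K, ⟪w, y⟫ ≤ ⟪w, x⟫ := fun y hy => hmax hy
  refine ⟨x, ⟨subset_closure hxK, fun hx => lt_irrefl _ (inner_lt_of_mem_interior hw hx hM)⟩, ?_⟩
  rintro u ⟨l, hl, hu⟩
  have h := inner_lt_of_mem_interior hw hu hM
  rw [inner_add_right, inner_smul_right] at h
  by_contra! h0
  have := mul_nonneg hl.le h0
  linarith

lemma countP_add_countP_le_card {α : Type*} (P Q : α → Prop) (h : ∀ a, P a → ¬ Q a)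
    (U : Multiset α) : U.countP P + U.countP Q ≤ Multiset.card U := by
  induction U using Multiset.induction_on with
  | empty => simp
  | cons a U ih =>
    rw [Multiset.countP_cons, Multiset.countP_cons, Multiset.card_cons]
    have := h a
    by_cases h1 : P a <;> by_cases h2 : Q a <;> simp_all <;> omega

lemma two_mul_add_one_le_card {K : Set (EuclideanSpace ℝ (Fin 2))}
    (hK : IsCompact K) (hne : K.Nonempty) {m : ℕ} (hm : 1 ≤ m)
    {U : Multiset (EuclideanSpace ℝ (Fin 2))} (hU : MFoldIlluminates m K U) :
    2 * m + 1 ≤ Multiset.card U := by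
  obtain ⟨hunit, hill⟩ := hU
  obtain ⟨u₀, hu₀⟩ : ∃ u, u ∈ U := by
    have hw : (!₂[1, 0] : EuclideanSpace ℝ (Fin 2)) ≠ 0 := fun h => by
      simpa using congrArg (fun v : EuclideanSpace ℝ (Fin 2) => v 0) h
    obtain ⟨x, hx, -⟩ := exists_frontier_inner_neg hK hne hw
    have := hill x hx
    obtain ⟨u, hu, -⟩ := Multiset.countP_pos.mp (lt_of_lt_of_le hm this)
    exact ⟨u, hu⟩
  set w : EuclideanSpace ℝ (Fin 2) := !₂[-u₀ 1, u₀ 0] with hwdef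
  have hwu : ⟪w, u₀⟫ = 0 := by
    simp [hwdef, PiLp.inner_apply, Fin.sum_univ_two]; ring
  have hw : w ≠ 0 := fun h => by
    have h0 : u₀ 1 = 0 := by
      simpa [hwdef] using congrArg (fun v : EuclideanSpace ℝ (Fin 2) => v 0) h
    have h1 : u₀ 0 = 0 := by
      simpa [hwdef] using congrArg (fun v : EuclideanSpace ℝ (Fin 2) => v 1) h
    have h2 := hunit u₀ hu₀
    rw [EuclideanSpace.norm_eq, Fin.sum_univ_two, h0, h1] at h2
    norm_num at h2
  obtain ⟨x, hx, hxu⟩ := exists_frontier_inner_neg hK hne hw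
  obtain ⟨y, hy, hyu⟩ := exists_frontier_inner_neg hK hne (neg_ne_zero.mpr hw)
  have hx' := hill x hx
  have hy' := hill y hy
  have hx0 : ¬ Illuminates K u₀ x := fun h => by
    have := hxu _ h; linarith
  have hy0 : ¬ Illuminates K u₀ y := fun h => by
    have := hyu _ h; rw [inner_neg_left] at this; linarith
  obtain ⟨V, rfl⟩ := Multiset.exists_cons_of_mem hu₀
  rw [Multiset.countP_cons_of_neg (p := fun u => Illuminates K u x) _ hx0] at hx'
  rw [Multiset.countP_cons_of_neg (p := fun u => Illuminates K u y) _ hy0] at hy'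
  have := countP_add_countP_le_card (fun u => Illuminates K u x) (fun u => Illuminates K u y)
    (fun u h1 h2 => by
      have h3 := hxu _ h1
      have h4 := hyu _ h2
      rw [inner_neg_left] at h4
      linarith) V
  rw [Multiset.card_cons]
  omega

/-! ### Illuminating a polygon at its vertices -/

/-- Every point of a polytope is illuminated by all the directions that illuminate some suitable
vertex.  The points with this property form a convex set containing the vertices: a direction that
illuminates `x` illuminates `a • x + b • y` whenever `0 < a`. -/
lemma exists_vertex_illuminates {d : ℕ} {ι : Type*}
    (p : ι → EuclideanSpace ℝ (Fin d)) {x : EuclideanSpace ℝ (Fin d)}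
    (hx : x ∈ convexHull ℝ (Set.range p)) :
    ∃ i, ∀ u, Illuminates (convexHull ℝ (Set.range p)) u (p i) →
      Illuminates (convexHull ℝ (Set.range p)) u x := by
  set K := convexHull ℝ (Set.range p) with hK
  have hconv : Convex ℝ K := convex_convexHull ℝ _
  have hsub : K ⊆ {x | x ∈ K ∧ ∃ i, ∀ u, Illuminates K u (p i) → Illuminates K u x} := by
    refine convexHull_min ?_ ?_
    · rintro _ ⟨i, rfl⟩
      exact ⟨subset_convexHull ℝ _ ⟨i, rfl⟩, i, fun u h => h⟩
    · rintro x ⟨hx, i, hi⟩ y ⟨hy, hy'⟩ a b ha hb hab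
      refine ⟨hconv hx hy ha hb hab, ?_⟩
      rcases ha.eq_or_lt with rfl | ha
      · obtain rfl : b = 1 := by linarith
        simpa using hy'
      · refine ⟨i, fun u hu => ?_⟩
        obtain ⟨l, hl, hlu⟩ := hi u hu
        refine ⟨a * l, mul_pos ha hl, ?_⟩
        convert hconv.combo_interior_self_mem_interior hlu hy ha hb hab using 1
        module
  exact (hsub hx).2

/-- The interior of the triangle with vertices `q`, `q + A`, `q + B` is interior to any convex set
containing these vertices. -/
lemma triangle_mem_interior {K : Set (EuclideanSpace ℝ (Fin 2))} (hK : Convex ℝ K)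
    {q A B : EuclideanSpace ℝ (Fin 2)} (hq : q ∈ K) (hA : q + A ∈ K) (hB : q + B ∈ K)
    (hD : A 0 * B 1 - A 1 * B 0 ≠ 0) {α β : ℝ} (hα : 0 < α) (hβ : 0 < β) (hαβ : α + β < 1) :
    q + (α • A + β • B) ∈ interior K := by
  set D := A 0 * B 1 - A 1 * B 0 with hDdef
  -- The coordinates of `x - q` in the basis `A, B`, by Cramer's rule.
  set f : EuclideanSpace ℝ (Fin 2) → ℝ :=
    fun x => ((x 0 - q 0) * B 1 - (x 1 - q 1) * B 0) / D with hf
  set g : EuclideanSpace ℝ (Fin 2) → ℝ :=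
    fun x => (A 0 * (x 1 - q 1) - A 1 * (x 0 - q 0)) / D with hg
  have hfc : Continuous f := by fun_prop
  have hgc : Continuous g := by fun_prop
  have hopen : IsOpen {x | 0 < f x ∧ 0 < g x ∧ f x + g x < 1} :=
    (isOpen_lt continuous_const hfc).inter
      ((isOpen_lt continuous_const hgc).inter (isOpen_lt (hfc.add hgc) continuous_const))
  refine mem_interior.mpr ⟨_, ?_, hopen, ?_⟩
  · rintro x ⟨h1, h2, h3⟩
    have hx : x = (1 - f x - g x) • q + f x • (q + A) + g x • (q + B) := by
      ext i
      fin_cases i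
      · simp only [hf, hg, PiLp.add_apply, PiLp.smul_apply, smul_eq_mul, Fin.zero_eta]
        field_simp
        rw [hDdef]; ring
      · simp only [hf, hg, PiLp.add_apply, PiLp.smul_apply, smul_eq_mul, Fin.mk_one]
        field_simp
        rw [hDdef]; ring
    rw [hx]
    have h := hK.sum_mem (t := Finset.univ) (w := ![1 - f x - g x, f x, g x])
      (z := ![q, q + A, q + B])
      (by intro i _; fin_cases i <;> simp <;> linarith)
      (by simp only [Fin.sum_univ_three, Matrix.cons_val]; ring)
      (by intro i _; fin_cases i <;> simpa)
    simpa [Fin.sum_univ_three] using h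
  · have h1 : f (q + (α • A + β • B)) = α := by
      simp only [hf, PiLp.add_apply, PiLp.smul_apply, smul_eq_mul]
      field_simp
      rw [hDdef]; ring
    have h2 : g (q + (α • A + β • B)) = β := by
      simp only [hg, PiLp.add_apply, PiLp.smul_apply, smul_eq_mul]
      field_simp
      rw [hDdef]; ring
    simp only [Set.mem_ofPred_eq, h1, h2]
    exact ⟨hα, hβ, hαβ⟩

/-! ### Regular polygons -/

/-- The unit vector at angle `t`. -/
def circ (t : ℝ) : EuclideanSpace ℝ (Fin 2) := !₂[Real.cos t, Real.sin t]

lemma norm_circ (t : ℝ) : ‖circ t‖ = 1 := by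
  rw [EuclideanSpace.norm_eq, Fin.sum_univ_two]
  simp [circ]

lemma circ_add_int_mul (t : ℝ) (z : ℤ) : circ (t + z * (2 * Real.pi)) = circ t := by
  simp [circ, Real.cos_add_int_mul_two_pi, Real.sin_add_int_mul_two_pi]

/-- If `K` is convex and contains three consecutive vertices of a regular polygon with central angle
`2 * ψ`, the middle one at angle `τ`, then the directions making an angle less than `π / 2 - ψ` with
the inward radius illuminate the middle vertex. -/
lemma illuminates_vertex_s4 {K : Set (EuclideanSpace ℝ (Fin 2))} (hK : Convex ℝ K)
    {c : EuclideanSpace ℝ (Fin 2)} {r τ ψ δ : ℝ} (hr : 0 < r)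
    (hψ : 0 < ψ) (hψ2 : ψ < Real.pi / 2)
    (h0 : c + r • circ τ ∈ K) (h1 : c + r • circ (τ + 2 * ψ) ∈ K)
    (h2 : c + r • circ (τ - 2 * ψ) ∈ K) (hδ : |δ| + ψ < Real.pi / 2) :
    Illuminates K (-circ (τ + δ)) (c + r • circ τ) := by
  have hs : 0 < Real.sin ψ := Real.sin_pos_of_pos_of_lt_pi hψ (by linarith)
  have hc : 0 < Real.cos ψ := Real.cos_pos_of_mem_Ioo ⟨by linarith, hψ2⟩
  have hδ1 := neg_abs_le δ
  have hδ2 := le_abs_self δ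
  have ha : 0 < Real.cos (δ + ψ) := Real.cos_pos_of_mem_Ioo ⟨by linarith, by linarith⟩
  have hb : 0 < Real.cos (δ - ψ) := Real.cos_pos_of_mem_Ioo ⟨by linarith, by linarith⟩
  set S := Real.cos (δ + ψ) + Real.cos (δ - ψ) with hS
  have hSpos : 0 < S := by positivity
  set A : EuclideanSpace ℝ (Fin 2) := r • circ (τ + 2 * ψ) - r • circ τ with hA
  set B : EuclideanSpace ℝ (Fin 2) := r • circ (τ - 2 * ψ) - r • circ τ with hB
  have hcs := Real.sin_sq_add_cos_sq τ
  have hcs' := Real.sin_sq_add_cos_sq ψ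
  -- Addition formulas reduce everything to polynomial identities in the basic sines and cosines.
  have hD : A 0 * B 1 - A 1 * B 0 = 8 * r ^ 2 * Real.sin ψ ^ 3 * Real.cos ψ := by
    simp only [hA, hB, circ, PiLp.sub_apply, PiLp.smul_apply, smul_eq_mul,
      Matrix.cons_val_zero, Matrix.cons_val_one, Real.cos_add, Real.cos_sub, Real.sin_add,
      Real.sin_sub, Real.cos_two_mul, Real.sin_two_mul]
    have h : Real.cos ψ ^ 2 = 1 - Real.sin ψ ^ 2 := by linarith
    have h' : Real.cos τ ^ 2 = 1 - Real.sin τ ^ 2 := by linarith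
    rw [h]
    ring_nf
    rw [h']
    ring
  -- This scaling makes the barycentric weights of the two neighbouring vertices add up to `1 / 2`.
  refine ⟨2 * r * Real.sin ψ ^ 2 * Real.cos ψ / S, by positivity, ?_⟩
  have hmem := triangle_mem_interior hK (q := c + r • circ τ) (A := A) (B := B)
    (α := Real.cos (δ + ψ) / (2 * S)) (β := Real.cos (δ - ψ) / (2 * S)) h0
    (by convert h1 using 1; rw [hA]; abel) (by convert h2 using 1; rw [hB]; abel)
    (by rw [hD]; positivity) (by positivity) (by positivity)
    (by rw [← add_div, ← hS, div_lt_one (by positivity)]; linarith)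
  convert hmem using 2
  have h : Real.cos ψ ^ 2 = 1 - Real.sin ψ ^ 2 := by linarith
  ext i
  fin_cases i
  · simp only [hA, hB, circ, PiLp.add_apply, PiLp.neg_apply, PiLp.sub_apply, PiLp.smul_apply,
      smul_eq_mul, Fin.zero_eta, Matrix.cons_val_zero]
    field_simp
    simp only [Real.cos_add, Real.cos_sub, Real.cos_two_mul, Real.sin_two_mul]
    rw [h]; ring
  · simp only [hA, hB, circ, PiLp.add_apply, PiLp.neg_apply, PiLp.sub_apply, PiLp.smul_apply,
      smul_eq_mul, Fin.mk_one, Matrix.cons_val_one,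
      Matrix.cons_val_fin_one]
    field_simp
    simp only [Real.sin_add, Real.sin_sub, Real.cos_add, Real.cos_sub, Real.cos_two_mul,
      Real.sin_two_mul]
    rw [h]; ring

/-- Blocks of `k` consecutive integers starting at `⌊j * n / N⌋`: the position `i` is covered by the
blocks of at least `m` consecutive indices `j`. -/
lemma exists_consecutive_blocks {n N k m : ℤ} (hn : 0 < n) (hN : 0 < N) (h : m * n ≤ k * N)
    (i : ℤ) : ∃ j₀ : ℤ, ∀ t, 0 ≤ t → t < m →
      i - k + 1 ≤ (j₀ + t) * n / N ∧ (j₀ + t) * n / N ≤ i := by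
  -- `j₀ = ⌈(i - k + 1) * N / n⌉`
  refine ⟨-(-((i - k + 1) * N) / n), fun t ht htm => ?_⟩
  set x := -((i - k + 1) * N) / n with hx
  have h1 : x * n ≤ -((i - k + 1) * N) := Int.ediv_mul_le _ hn.ne'
  have h2 : -((i - k + 1) * N) < (x + 1) * n := Int.lt_ediv_add_one_mul_self _ hn
  constructor
  · rw [Int.le_ediv_iff_mul_le hN]
    nlinarith [mul_nonneg ht hn.le]
  · rw [← Int.lt_add_one_iff, Int.ediv_lt_iff_lt_mul hN]
    nlinarith [mul_le_mul_of_nonneg_right (Int.le_sub_one_of_lt htm) hn.le]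

/-- Theorem 4 (second part): for a regular convex `n`-sided polygon `K`, if `n` is
odd with `n ≥ 2m + 1`, or `n` is even with `n ≥ 4m + 2`, then `I^m(K) = 2m + 1`. -/
theorem mfold_illumination_regular_polygon_special (n : ℕ) (hn : 3 ≤ n)
    (c : EuclideanSpace ℝ (Fin 2)) (r θ : ℝ) (hr : 0 < r)
    (p : Fin n → EuclideanSpace ℝ (Fin 2))
    (hp : ∀ i : Fin n, p i = c + r •
      (WithLp.equiv 2 (Fin 2 → ℝ)).symm
      ![Real.cos (θ + 2 * Real.pi * (i : ℝ) / (n : ℝ)),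
        Real.sin (θ + 2 * Real.pi * (i : ℝ) / (n : ℝ))])
    (K : Set (EuclideanSpace ℝ (Fin 2))) (hK : K = convexHull ℝ (Set.range p))
    (m : ℕ) (hm : 1 ≤ m)
    (hcond : (Odd n ∧ 2 * m + 1 ≤ n) ∨ (Even n ∧ 4 * m + 2 ≤ n)) :
    illumNum m K = 2 * m + 1 := by
  have hn0 : (0 : ℝ) < n := by positivity
  have hpi := Real.pi_pos
  set P : ℤ → EuclideanSpace ℝ (Fin 2) :=
    fun j => c + r • circ (θ + 2 * Real.pi * j / n) with hP
  have hpP : ∀ i : Fin n, p i = P ((i : ℕ) : ℤ) := fun i => by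
    rw [hp i, hP]
    simp only [Int.cast_natCast]
    rfl
  have hPmem : ∀ j : ℤ, P j ∈ K := fun j => by
    have hlt : (j % n).toNat < n := by
      have := Int.emod_lt_of_pos j (b := n) (by omega)
      omega
    have hnn : 0 ≤ j % n := Int.emod_nonneg _ (by omega)
    have hPj : P j = p ⟨(j % n).toNat, hlt⟩ := by
      rw [hpP]
      simp only [hP, Int.toNat_of_nonneg hnn]
      congr 2
      rw [← circ_add_int_mul (θ + 2 * Real.pi * ((j % n : ℤ) : ℝ) / n) (j / n)]
      congr 1
      have hj : (j : ℝ) = n * ((j / n : ℤ) : ℝ) + ((j % n : ℤ) : ℝ) := by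
        exact_mod_cast (Int.mul_ediv_add_emod j n).symm
      rw [hj]
      field_simp
      ring
    rw [hPj, hK]
    exact subset_convexHull ℝ _ ⟨_, rfl⟩
  have hconv : Convex ℝ K := hK ▸ convex_convexHull ℝ _
  have hcpt : IsCompact K := hK ▸ (Set.finite_range p).isCompact_convexHull ℝ
  have hne : K.Nonempty := ⟨_, hPmem 0⟩
  obtain ⟨k, hkn, hkm⟩ : ∃ k : ℤ, 2 * k < n ∧ (m : ℤ) * n ≤ k * (2 * m + 1) := by
    rcases hcond with ⟨⟨k, hk⟩, h⟩ | ⟨⟨k, hk⟩, h⟩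
    · refine ⟨k, by omega, ?_⟩
      have hk' : (n : ℤ) = 2 * k + 1 := by exact_mod_cast hk
      have : (m : ℤ) ≤ k := by omega
      rw [hk']; linarith
    · refine ⟨k - 1, by omega, ?_⟩
      have hk' : (n : ℤ) = k + k := by exact_mod_cast hk
      have : 2 * (m : ℤ) + 1 ≤ k := by omega
      rw [hk']; linarith
  -- The direction opposite to the midpoint of the `j`-th block.
  set v : ℤ → EuclideanSpace ℝ (Fin 2) := fun j =>
    -circ (θ + 2 * Real.pi * (((j * n / (2 * m + 1) : ℤ) : ℝ) + ((k : ℝ) - 1) / 2) / n) with hv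
  have hvper : ∀ j, v (j % (2 * m + 1)) = v j := fun j => by
    have hN : (2 * (m : ℤ) + 1) ≠ 0 := by omega
    have hfl : j * n / (2 * m + 1) =
        (j % (2 * m + 1)) * n / (2 * m + 1) + (j / (2 * m + 1)) * n := by
      conv_lhs => rw [← Int.emod_add_mul_ediv j (2 * m + 1)]
      rw [← Int.add_mul_ediv_right _ _ hN]
      congr 1
      ring
    simp only [hv]
    rw [hfl, ← circ_add_int_mul _ (j / (2 * m + 1))]
    congr 2
    push_cast
    field_simp
    ring
  have hvill : ∀ i j : ℤ, i - k + 1 ≤ j * n / (2 * m + 1) → j * n / (2 * m + 1) ≤ i →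
      Illuminates K (v j) (P i) := fun i j h1 h2 => by
    set a : ℤ := j * n / (2 * m + 1) with ha
    have h1' : (i : ℝ) - k + 1 ≤ a := by exact_mod_cast h1
    have h2' : (a : ℝ) ≤ i := by exact_mod_cast h2
    have hk' : 2 * (k : ℝ) < n := by exact_mod_cast hkn
    have hn3 : (3 : ℝ) ≤ n := by exact_mod_cast hn
    have key := illuminates_vertex_s4 hconv (c := c) (r := r) (τ := θ + 2 * Real.pi * i / n)
      (ψ := Real.pi / n) (δ := Real.pi / n * (2 * a + (k - 1) - 2 * i)) hr (by positivity)
      (by rw [div_lt_div_iff_of_pos_left hpi hn0 two_pos]; linarith)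
      (hPmem i)
      (by convert hPmem (i + 1) using 4; push_cast; ring)
      (by convert hPmem (i - 1) using 4; push_cast; ring)
      (by
        rw [abs_mul, abs_of_pos (by positivity : 0 < Real.pi / n)]
        have hab : |2 * (a : ℝ) + (k - 1) - 2 * i| ≤ k - 1 :=
          abs_le.mpr ⟨by linarith, by linarith⟩
        calc Real.pi / n * |2 * (a : ℝ) + (k - 1) - 2 * i| + Real.pi / n
            ≤ Real.pi / n * (k - 1) + Real.pi / n := by gcongr
          _ = Real.pi / n * k := by ring
          _ < Real.pi / n * (n / 2) := by gcongr; linarith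
          _ = Real.pi / 2 := by field_simp)
    convert key using 1
    simp only [hv]
    congr 2
    rw [← ha]
    field_simp
    ring
  have hupper : ∃ U : Multiset (EuclideanSpace ℝ (Fin 2)),
      MFoldIlluminates m K U ∧ Multiset.card U = 2 * m + 1 := by
    refine ⟨(Multiset.range (2 * m + 1)).map (fun j : ℕ => v j), ⟨?_, ?_⟩, by simp⟩
    · intro u hu
      obtain ⟨j, -, rfl⟩ := Multiset.mem_map.mp hu
      simp only [hv, norm_neg, norm_circ]
    · intro x hx
      have hxK : x ∈ K := hcpt.isClosed.frontier_subset hx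
      obtain ⟨i, hi⟩ := exists_vertex_illuminates p (hK ▸ hxK)
      rw [← hK, hpP] at hi
      obtain ⟨j₀, hj₀⟩ := exists_consecutive_blocks (n := n) (N := 2 * m + 1) (by omega) (by omega)
        hkm i
      rw [Multiset.countP_map]
      change m ≤ ((Finset.range (2 * m + 1)).filter
        (fun j : ℕ => Illuminates K (v j) x)).card
      conv_lhs => rw [← Finset.card_range m]
      -- Distinct `t < m` give indices `j₀ + t` that stay distinct modulo `2 * m + 1`.
      refine Finset.card_le_card_of_injOn
        (fun t : ℕ => ((j₀ + t) % (2 * m + 1)).toNat) ?_ ?_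
      · intro t ht
        have ht' : t < m := by simpa using ht
        have hnn : 0 ≤ (j₀ + t) % (2 * m + 1) := Int.emod_nonneg _ (by omega)
        have hlt := Int.emod_lt_of_pos (j₀ + t) (b := 2 * m + 1) (by omega)
        simp only [Finset.coe_filter, Finset.mem_range, Set.mem_ofPred_eq]
        refine ⟨by omega, ?_⟩
        rw [Int.toNat_of_nonneg hnn, hvper]
        obtain ⟨h1, h2⟩ := hj₀ t (by omega) (by omega)
        exact hi _ (hvill _ _ h1 h2)
      · intro s hs t ht hst
        have hs' : s < m := by simpa using hs
        have ht' : t < m := by simpa using ht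
        have h1 : 0 ≤ (j₀ + s) % (2 * m + 1) := Int.emod_nonneg _ (by omega)
        have h2 : 0 ≤ (j₀ + t) % (2 * m + 1) := Int.emod_nonneg _ (by omega)
        have h3 : (j₀ + s) % (2 * m + 1) = (j₀ + t) % (2 * m + 1) := by
          simp only at hst; omega
        have h4 : (2 * (m : ℤ) + 1) ∣ (j₀ + t) - (j₀ + s) := Int.ModEq.dvd h3
        have h5 := Int.eq_zero_of_abs_lt_dvd h4 (by rw [abs_lt]; constructor <;> omega)
        omega
  refine le_antisymm (Nat.sInf_le hupper) (le_csInf ⟨_, hupper⟩ ?_)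
  rintro N ⟨U, hU, rfl⟩
  exact two_mul_add_one_le_card hcpt hne hm hU
end
end
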